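/- For all ε > 0 and Δ > 0, the infimum of V(μ) = ∫_{ℝ²} ‖x‖₁ dμ(x) over all probability measures μ on ℝ² satisfying the ε-differential-privacy constraint equals the infimum over γ ∈ [0,1] of ∫_{ℝ²} ‖x‖₁ f_γ(x) dx, where f_γ is the two-dimensional staircase density with parameter γ. (Theorem 1, optimality of the staircase mechanism for d = 2 and the ℓ¹ cost.) -/

import Mathlib

open MeasureTheory Real Filter
open scoped ENNReal Topology

noncomputable section

/-- The ℓ¹ norm on ℝ². -/
def l1 (x : ℝ × ℝ) : ℝ := |x.1| + |x.2|

/-- The ε-differential-privacy constraint on a measure on ℝ² with sensitivity Δ. -/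
def DPC (ε Δ : ℝ) (μ : Measure (ℝ × ℝ)) : Prop :=
  ∀ S : Set (ℝ × ℝ), MeasurableSet S → ∀ t : ℝ × ℝ, l1 t ≤ Δ →
    μ S ≤ ENNReal.ofReal (Real.exp ε) * μ ((· + t) '' S)

/-- Expected ℓ¹ cost of a noise distribution. -/
def cost (μ : Measure (ℝ × ℝ)) : ℝ≥0∞ := ∫⁻ x, ENNReal.ofReal (l1 x) ∂μ

/-- Normalization constant of the 2-dimensional staircase density. -/
def anorm (ε Δ γ : ℝ) : ℝ :=
  1 / (2 * Δ ^ 2 * (γ ^ 2 + 2 * Real.exp (-ε) / (1 - Real.exp (-ε)) * γ +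
    (Real.exp (-ε) + Real.exp (-ε) ^ 2) / (1 - Real.exp (-ε)) ^ 2))

/-- The 2-dimensional staircase density with parameter γ; for ‖x‖₁ ∈ [kΔ, (k+γ)Δ) it
equals a(γ)·e^{-kε}, and for ‖x‖₁ ∈ [(k+γ)Δ, (k+1)Δ) it equals a(γ)·e^{-(k+1)ε}. -/
def stair (ε Δ γ : ℝ) (x : ℝ × ℝ) : ℝ :=
  if l1 x < ((⌊l1 x / Δ⌋ : ℝ) + γ) * Δ then
    anorm ε Δ γ * Real.exp (-(⌊l1 x / Δ⌋ : ℝ) * ε)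
  else
    anorm ε Δ γ * Real.exp (-((⌊l1 x / Δ⌋ : ℝ) + 1) * ε)

/-!
Write `b = exp (-ε)`. Convolving a private measure with the uniform distribution on a small ball
keeps it private and increases its cost by at most the radius of the ball, so one may assume a
bounded density. Averaging that density over spheres turns it into a profile `p` on `(0, ∞)` that
varies by a factor of at most `b⁻¹` over unit distance, with mass `∫ r * p r` and cost
`∫ r ^ 2 * p r`. It remains to prove the linear inequality `0 ≤ ∫ r * (r - v) * p r`, where `v` is
the least ratio of second to first moment among staircase profiles.

For this, solve `G r - b * G (r + 1) = r * (r - v)` by a quadratic polynomial `G`. If `p` were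
multiplied by exactly `b` under unit translation, the integral would telescope to `∫ G * p` over
`[0, 1]`, and where `G` changes sign the optimal `p` would jump: this gives the staircase, with its
threshold at the larger root `γ` of `G`. For general `p`, privacy yields a plateau value `m` that
bounds `p` from above between the roots of `G`, while `b * m` bounds it from below from `γ` to one
unit after the smaller root. The integral is then at least `m` times its value for the staircase,
which vanishes by the choice of `v`.
-/

/-! ### Discounted differences on a ray -/

lemma integrableOn_Ioi_comp_add_right {f : ℝ → ℝ} {a t : ℝ} (ht : 0 ≤ t)
    (hf : IntegrableOn f (Set.Ioi a)) : IntegrableOn (fun r => f (r + t)) (Set.Ioi a) := by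
  have hpre : (· + t) ⁻¹' Set.Ioi (a + t) = Set.Ioi a := by simp
  have hshift := (measurePreserving_add_right volume t).integrableOn_comp_preimage
    (measurableEmbedding_addRight t) (f := f) (s := Set.Ioi (a + t))
  rw [hpre] at hshift
  exact hshift.2 (hf.mono_set (Set.Ioi_subset_Ioi (by linarith)))

lemma integral_Ioi_sub_comp_add_right {f : ℝ → ℝ} {a t : ℝ} (ht : 0 ≤ t)
    (hf : IntegrableOn f (Set.Ioi a)) :
    ∫ r in Set.Ioi a, (f r - f (r + t)) = ∫ r in a..a + t, f r := by
  have hpre : (· + t) ⁻¹' Set.Ioi (a + t) = Set.Ioi a := by simp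
  have hshift := (measurePreserving_add_right volume t).setIntegral_preimage_emb
    (measurableEmbedding_addRight t) f (Set.Ioi (a + t))
  rw [hpre] at hshift
  rw [integral_sub hf (integrableOn_Ioi_comp_add_right ht hf), hshift,
    intervalIntegral.integral_Ioi_sub_Ioi hf (by linarith)]

lemma intervalIntegrable_of_integrableOn_Ioi {f : ℝ → ℝ} {a c d : ℝ} (hac : a ≤ c) (hcd : c ≤ d)
    (hf : IntegrableOn f (Set.Ioi a)) : IntervalIntegrable f volume c d := by
  rw [intervalIntegrable_iff_integrableOn_Ioc_of_le hcd]
  exact hf.mono_set (Set.Ioc_subset_Ioi_self.trans (Set.Ioi_subset_Ioi hac))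

/-- The operator `G ↦ G - b G(· + 1)`. Its integral over `(0, ∞)` against a function that is
multiplied by `b` under unit translation telescopes to an integral over `[0, 1]`. -/
def discountedDiff (b : ℝ) (G : ℝ → ℝ) (r : ℝ) : ℝ := G r - b * G (r + 1)

/-! ### The staircase profile -/

/-- The staircase with unit steps: on `[k, k + 1)` it equals `b ^ k` up to `k + γ`, and
`b ^ (k + 1)` from there on. It is defined on all of `ℝ` so that the recursion
`staircaseProfile_add_one` needs no side condition. -/
def staircaseProfile (b γ r : ℝ) : ℝ :=
  if r < ⌊r⌋ + γ then b ^ ⌊r⌋ else b ^ (⌊r⌋ + 1)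

section StaircaseProfile

variable {b γ : ℝ}

lemma measurable_staircaseProfile (b γ : ℝ) : Measurable (staircaseProfile b γ) := by
  have hfloor (g : ℤ → ℝ) : Measurable fun r : ℝ => g ⌊r⌋ :=
    measurable_from_top.comp Int.measurable_floor
  exact Measurable.ite (measurableSet_lt measurable_id ((hfloor _).add_const γ))
    (hfloor fun k => b ^ k) (hfloor fun k => b ^ (k + 1))

lemma staircaseProfile_pos (hb : 0 < b) (r : ℝ) : 0 < staircaseProfile b γ r := by
  unfold staircaseProfile
  split_ifs <;> positivity

lemma staircaseProfile_add_one (hb : b ≠ 0) (r : ℝ) :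
    staircaseProfile b γ (r + 1) = b * staircaseProfile b γ r := by
  have hstep : r + 1 < (⌊r⌋ + 1 : ℤ) + γ ↔ r < ⌊r⌋ + γ := by
    push_cast
    constructor <;> intro h <;> linarith
  simp only [staircaseProfile, Int.floor_add_one, hstep, zpow_add_one₀ hb]
  split_ifs <;> ring

lemma staircaseProfile_eq_one {r : ℝ} (hγ : γ ≤ 1) (hr : r ∈ Set.Ico 0 γ) :
    staircaseProfile b γ r = 1 := by
  have hfloor : ⌊r⌋ = 0 := Int.floor_eq_zero_iff.2 ⟨hr.1, hr.2.trans_le hγ⟩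
  simp [staircaseProfile, hfloor, hr.2]

lemma staircaseProfile_eq_self {r : ℝ} (hγ : 0 ≤ γ) (hr : r ∈ Set.Ico γ 1) :
    staircaseProfile b γ r = b := by
  have hfloor : ⌊r⌋ = 0 := Int.floor_eq_zero_iff.2 ⟨hγ.trans hr.1, hr.2⟩
  simp [staircaseProfile, hfloor, hr.1]

lemma antitone_staircaseProfile (hb : 0 < b) (hb1 : b ≤ 1) : Antitone (staircaseProfile b γ) := by
  have hpow : Antitone fun k : ℤ => b ^ k := fun _ _ h => zpow_le_zpow_right_of_le_one₀ hb hb1 h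
  intro r s hrs
  have hfloor : ⌊r⌋ ≤ ⌊s⌋ := Int.floor_mono hrs
  unfold staircaseProfile
  split_ifs with hs hr hr
  · exact hpow hfloor
  · refine hpow (Int.add_one_le_iff.2 (hfloor.lt_of_ne fun h => hr ?_))
    exact hrs.trans_lt (h ▸ hs)
  · exact hpow (by omega)
  · exact hpow (by omega)

lemma staircaseProfile_le_exp (hb : 0 < b) (hb1 : b ≤ 1) (r : ℝ) :
    staircaseProfile b γ r ≤ b⁻¹ * exp (log b * r) := by
  have hpow : Antitone fun x : ℝ => b ^ x := fun _ _ h => rpow_le_rpow_of_exponent_ge hb hb1 h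
  have hexp : b⁻¹ * exp (log b * r) = b ^ (r - 1) := by
    rw [rpow_sub_one hb.ne', rpow_def_of_pos hb, inv_mul_eq_div]
  rw [hexp]
  unfold staircaseProfile
  split_ifs
  · rw [← rpow_intCast]
    exact hpow (Int.sub_one_lt_floor r).le
  · rw [← rpow_intCast]
    refine hpow ?_
    push_cast
    linarith [Int.sub_one_lt_floor r]

lemma integrableOn_pow_mul_staircaseProfile (hb : 0 < b) (hb1 : b < 1) (n : ℕ) :
    IntegrableOn (fun r => r ^ n * staircaseProfile b γ r) (Set.Ioi 0) := by
  have hdom : IntegrableOn (fun r => b⁻¹ * (r ^ n * exp (log b * r))) (Set.Ioi 0) := by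
    have h := integrableOn_rpow_mul_exp_neg_mul_rpow (s := n) (p := 1) (b := -log b)
      (by linarith [n.cast_nonneg (α := ℝ)]) one_pos (neg_pos.2 (log_neg hb hb1))
    simpa [IntegrableOn] using h.const_mul b⁻¹
  refine hdom.mono'
    ((measurable_id.pow_const n).mul (measurable_staircaseProfile b γ)).aestronglyMeasurable ?_
  filter_upwards [ae_restrict_mem measurableSet_Ioi] with r (hr : 0 < r)
  rw [norm_of_nonneg (mul_nonneg (by positivity) (staircaseProfile_pos hb r).le), mul_left_comm]
  exact mul_le_mul_of_nonneg_left (staircaseProfile_le_exp hb hb1.le r) (by positivity)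

variable {G : ℝ → ℝ}

lemma discountedDiff_mul_staircaseProfile (hb : b ≠ 0) (r : ℝ) :
    discountedDiff b G r * staircaseProfile b γ r =
      G r * staircaseProfile b γ r - G (r + 1) * staircaseProfile b γ (r + 1) := by
  rw [staircaseProfile_add_one hb, discountedDiff]
  ring

lemma integral_discountedDiff_mul_staircaseProfile (hb : b ≠ 0) (hγ0 : 0 ≤ γ) (hγ1 : γ ≤ 1)
    (hG : IntegrableOn (fun r => G r * staircaseProfile b γ r) (Set.Ioi 0)) :
    ∫ r in Set.Ioi 0, discountedDiff b G r * staircaseProfile b γ r =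
      (∫ r in 0..γ, G r) + b * ∫ r in γ..1, G r := by
  have hlow : ∫ r in 0..γ, G r * staircaseProfile b γ r = ∫ r in 0..γ, G r :=
    intervalIntegral.integral_congr_Ioo_of_le hγ0 fun r hr => by
      simp [staircaseProfile_eq_one hγ1 (Set.Ioo_subset_Ico_self hr)]
  have hhigh : ∫ r in γ..1, G r * staircaseProfile b γ r = b * ∫ r in γ..1, G r := by
    rw [← intervalIntegral.integral_const_mul]
    refine intervalIntegral.integral_congr_Ioo_of_le hγ1 fun r hr => ?_
    simp only [staircaseProfile_eq_self hγ0 (Set.Ioo_subset_Ico_self hr), mul_comm]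
  simp only [discountedDiff_mul_staircaseProfile hb]
  rw [integral_Ioi_sub_comp_add_right (f := fun r => G r * staircaseProfile b γ r) zero_le_one hG,
    zero_add, ← hlow, ← hhigh, intervalIntegral.integral_add_adjacent_intervals]
  · exact intervalIntegrable_of_integrableOn_Ioi le_rfl hγ0 hG
  · exact intervalIntegrable_of_integrableOn_Ioi hγ0 hγ1 hG

end StaircaseProfile

/-! ### Extremality of the staircase among private profiles -/

/-- The privacy constraint along one ray: a function on `(0, ∞)` varies by a factor of at most
`b⁻¹` over unit distance. -/
def IsRadiallyPrivate (b : ℝ) (p : ℝ → ℝ) : Prop :=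
  ∀ r s, 0 < r → 0 < s → |r - s| ≤ 1 → b * p r ≤ p s

/-- A dual certificate for the optimality of `staircaseProfile b γ`: a function on `[0, ∞)` that is
nonpositive between the thresholds `γ' ≤ γ` and nonnegative elsewhere. Its discounted difference is
the weight of the linear functional that the staircase minimizes. -/
structure IsDualCertificate (b γ' γ : ℝ) (G : ℝ → ℝ) : Prop where
  continuous : Continuous G
  lower_pos : 0 < γ'
  lower_le_upper : γ' ≤ γ
  upper_le_one : γ ≤ 1
  nonneg_of_le_lower : ∀ r, 0 ≤ r → r ≤ γ' → 0 ≤ G r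
  nonpos_of_mem_Icc : ∀ r ∈ Set.Icc γ' γ, G r ≤ 0
  nonneg_of_upper_le : ∀ r, γ ≤ r → 0 ≤ G r
  discountedDiff_nonpos : ∀ r, 0 ≤ r → r ≤ γ → discountedDiff b G r ≤ 0

section Extremality

variable {b : ℝ} {p : ℝ → ℝ}

lemma IsRadiallyPrivate.nonneg (hp : IsRadiallyPrivate b p) (hb1 : b < 1) {r : ℝ} (hr : 0 < r) :
    0 ≤ p r := by
  have := hp r r hr hr (by simp)
  nlinarith

lemma IsRadiallyPrivate.mul_le_add_one (hp : IsRadiallyPrivate b p) {r : ℝ} (hr : 0 < r) :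
    b * p r ≤ p (r + 1) :=
  hp r (r + 1) hr (by linarith) (by simp)

lemma IsRadiallyPrivate.exists_plateau (hp : IsRadiallyPrivate b p) (hb : 0 < b) (hb1 : b < 1)
    {γ' γ : ℝ} (hγ' : 0 < γ') (hγ'γ : γ' ≤ γ) (hγ : γ ≤ γ' + 1) :
    ∃ m, 0 ≤ m ∧ (∀ r ∈ Set.Icc γ' γ, p r ≤ m) ∧ ∀ s ∈ Set.Icc γ (1 + γ'), b * m ≤ p s := by
  have hcompare : ∀ r ∈ Set.Icc γ' γ, ∀ s ∈ Set.Icc γ (1 + γ'), p r ≤ p s / b := by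
    intro r hr s hs
    rw [le_div_iff₀' hb]
    refine hp r s (hγ'.trans_le hr.1) (by linarith [hs.1]) ?_
    rw [abs_le]
    constructor <;> linarith [hr.1, hr.2, hs.1, hs.2]
  have hbdd : BddAbove (p '' Set.Icc γ' γ) :=
    ⟨p γ / b, by rintro _ ⟨r, hr, rfl⟩; exact hcompare r hr γ ⟨le_rfl, by linarith⟩⟩
  have hle : ∀ r ∈ Set.Icc γ' γ, p r ≤ sSup (p '' Set.Icc γ' γ) := fun r hr =>
    le_csSup hbdd ⟨r, hr, rfl⟩
  refine ⟨sSup (p '' Set.Icc γ' γ), ?_, hle, fun s hs => ?_⟩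
  · exact (hp.nonneg hb1 hγ').trans (hle γ' ⟨le_rfl, hγ'γ⟩)
  · rw [← le_div_iff₀' hb]
    refine csSup_le ((Set.nonempty_Icc.2 hγ'γ).image p) ?_
    rintro _ ⟨r, hr, rfl⟩
    exact hcompare r hr s hs

lemma IsRadiallyPrivate.integral_Icc_le_integral_Ioi_discountedDiff (hp : IsRadiallyPrivate b p)
    {G : ℝ → ℝ} {γ : ℝ} (hγ : 0 ≤ γ) (hG : ∀ r, γ ≤ r → 0 ≤ G r)
    (hGp : IntegrableOn (fun r => G r * p r) (Set.Ioi γ))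
    (hwp : IntegrableOn (fun r => discountedDiff b G r * p r) (Set.Ioi γ)) :
    ∫ r in γ..γ + 1, G r * p r ≤ ∫ r in Set.Ioi γ, discountedDiff b G r * p r := by
  rw [← integral_Ioi_sub_comp_add_right zero_le_one hGp]
  refine setIntegral_mono_on (hGp.sub (integrableOn_Ioi_comp_add_right zero_le_one hGp)) hwp
    measurableSet_Ioi fun r (hr : γ < r) => ?_
  have hdecay := mul_le_mul_of_nonneg_left (hp.mul_le_add_one (hγ.trans_lt hr))
    (hG (r + 1) (by linarith))
  dsimp only [discountedDiff]
  linarith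

variable {γ' γ m : ℝ} {G : ℝ → ℝ}

-- Left of `γ'`, where `G` is nonnegative, `m` is controlled by `p (r + 1)`; on `[γ', γ]`, where
-- `G` is nonpositive, it is controlled by `p r`.
lemma IsDualCertificate.mul_plateau_le (hG : IsDualCertificate b γ' γ G)
    (hp : IsRadiallyPrivate b p) (hb : 0 < b)
    (hupper : ∀ r ∈ Set.Icc γ' γ, p r ≤ m) (hlower : ∀ s ∈ Set.Icc γ (1 + γ'), b * m ≤ p s)
    {r : ℝ} (hr : r ∈ Set.Ioo 0 γ) :
    G r * m ≤ discountedDiff b G r * p r + G (r + 1) * p (r + 1) := by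
  obtain ⟨hr0, hrγ⟩ := hr
  have hγ1 := hG.upper_le_one
  have hdecay := hp.mul_le_add_one hr0
  have hrec : G r = discountedDiff b G r + b * G (r + 1) := by rw [discountedDiff]; ring
  rcases le_total r γ' with hrγ' | hγ'r
  · refine le_of_mul_le_mul_left ?_ hb
    calc
      b * (G r * m) = G r * (b * m) := by ring
      _ ≤ G r * p (r + 1) := mul_le_mul_of_nonneg_left
        (hlower (r + 1) ⟨by linarith, by linarith⟩) (hG.nonneg_of_le_lower r hr0.le hrγ')
      _ = discountedDiff b G r * p (r + 1) + b * G (r + 1) * p (r + 1) := by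
        rw [← add_mul, ← hrec]
      _ ≤ discountedDiff b G r * (b * p r) + b * G (r + 1) * p (r + 1) :=
        add_le_add_left (mul_le_mul_of_nonpos_left hdecay
          (hG.discountedDiff_nonpos r hr0.le hrγ.le)) _
      _ = b * (discountedDiff b G r * p r + G (r + 1) * p (r + 1)) := by ring
  · calc
      G r * m ≤ G r * p r := mul_le_mul_of_nonpos_left
        (hupper r ⟨hγ'r, hrγ.le⟩) (hG.nonpos_of_mem_Icc r ⟨hγ'r, hrγ.le⟩)
      _ = discountedDiff b G r * p r + G (r + 1) * (b * p r) := by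
        rw [mul_left_comm, ← mul_assoc b, ← add_mul, ← hrec]
      _ ≤ discountedDiff b G r * p r + G (r + 1) * p (r + 1) :=
        add_le_add_right (mul_le_mul_of_nonneg_left hdecay
          (hG.nonneg_of_upper_le (r + 1) (by linarith))) _

lemma IsDualCertificate.integral_mul_plateau_le (hG : IsDualCertificate b γ' γ G)
    (hp : IsRadiallyPrivate b p) (hb : 0 < b)
    (hupper : ∀ r ∈ Set.Icc γ' γ, p r ≤ m) (hlower : ∀ s ∈ Set.Icc γ (1 + γ'), b * m ≤ p s)
    (hGp : IntegrableOn (fun r => G r * p r) (Set.Ioi 0))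
    (hwp : IntegrableOn (fun r => discountedDiff b G r * p r) (Set.Ioi 0)) :
    (∫ r in 0..γ, G r) * m ≤
      (∫ r in 0..γ, discountedDiff b G r * p r) + ∫ r in 0..γ, G (r + 1) * p (r + 1) := by
  have hγ0 : 0 ≤ γ := hG.lower_pos.le.trans hG.lower_le_upper
  have hw := intervalIntegrable_of_integrableOn_Ioi le_rfl hγ0 hwp
  have hGp_succ := intervalIntegrable_of_integrableOn_Ioi le_rfl hγ0
    (integrableOn_Ioi_comp_add_right zero_le_one hGp)
  rw [← intervalIntegral.integral_add hw hGp_succ, ← intervalIntegral.integral_mul_const]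
  exact intervalIntegral.integral_mono_on_of_le_Ioo hγ0
    ((hG.continuous.mul continuous_const).intervalIntegrable _ _) (hw.add hGp_succ)
    fun r hr => hG.mul_plateau_le hp hb hupper hlower hr

lemma IsDualCertificate.exists_mul_le_integral (hG : IsDualCertificate b γ' γ G)
    (hp : IsRadiallyPrivate b p) (hb : 0 < b) (hb1 : b < 1)
    (hGp : IntegrableOn (fun r => G r * p r) (Set.Ioi 0))
    (hwp : IntegrableOn (fun r => discountedDiff b G r * p r) (Set.Ioi 0)) :
    ∃ m, 0 ≤ m ∧ ((∫ r in 0..γ, G r) + b * ∫ r in γ..1, G r) * m ≤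
      ∫ r in Set.Ioi 0, discountedDiff b G r * p r := by
  have hγ'0 := hG.lower_pos
  have hγ0 : 0 ≤ γ := hγ'0.le.trans hG.lower_le_upper
  have hγ1 := hG.upper_le_one
  obtain ⟨m, hm, hupper, hlower⟩ :=
    hp.exists_plateau hb hb1 hγ'0 hG.lower_le_upper (by linarith)
  refine ⟨m, hm, ?_⟩
  have htail := hp.integral_Icc_le_integral_Ioi_discountedDiff hγ0 hG.nonneg_of_upper_le
    (hGp.mono_set (Set.Ioi_subset_Ioi hγ0)) (hwp.mono_set (Set.Ioi_subset_Ioi hγ0))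
  have hmiddle : ∫ r in γ..1, G r * (b * m) ≤ ∫ r in γ..1, G r * p r := by
    refine intervalIntegral.integral_mono_on_of_le_Ioo hγ1
      ((hG.continuous.mul continuous_const).intervalIntegrable _ _)
      (intervalIntegrable_of_integrableOn_Ioi hγ0 hγ1 hGp) fun r hr => ?_
    exact mul_le_mul_of_nonneg_left (hlower r ⟨hr.1.le, by linarith [hr.2]⟩)
      (hG.nonneg_of_upper_le r hr.1.le)
  have hlow := hG.integral_mul_plateau_le hp hb hupper hlower hGp hwp
  have hsplit : ∫ r in γ..γ + 1, G r * p r =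
      (∫ r in γ..1, G r * p r) + ∫ r in 0..γ, G (r + 1) * p (r + 1) := by
    rw [intervalIntegral.integral_comp_add_right (fun r => G r * p r), zero_add,
      intervalIntegral.integral_add_adjacent_intervals]
    · exact intervalIntegrable_of_integrableOn_Ioi hγ0 hγ1 hGp
    · exact intervalIntegrable_of_integrableOn_Ioi zero_le_one (by linarith) hGp
  rw [intervalIntegral.integral_mul_const] at hmiddle
  rw [← intervalIntegral.integral_interval_add_Ioi hwp (hwp.mono_set (Set.Ioi_subset_Ioi hγ0))]
  linarith

end Extremality

/-! ### Moments of the staircase and the optimal threshold -/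

/-- The geometric tail `∑ k ≥ 1, b ^ k`. -/
def geomTail (b : ℝ) : ℝ := b / (1 - b)

/-- The `n`-th moment of the staircase profile on the half-line `(0, ∞)`. -/
def staircaseMoment (b γ : ℝ) (n : ℕ) : ℝ := ∫ r in Set.Ioi 0, r ^ n * staircaseProfile b γ r

section Moments

variable {b γ : ℝ}

lemma geomTail_pos (hb : 0 < b) (hb1 : b < 1) : 0 < geomTail b :=
  div_pos hb (sub_pos.2 hb1)

lemma mul_one_add_geomTail (hb1 : b < 1) : b * (1 + geomTail b) = geomTail b := by
  have : 1 - b ≠ 0 := (sub_pos.2 hb1).ne'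
  rw [geomTail]
  field_simp
  ring

lemma integrableOn_quadratic_mul {f : ℝ → ℝ} {s : Set ℝ} (α β δ : ℝ) (h0 : IntegrableOn f s)
    (h1 : IntegrableOn (fun r => r * f r) s) (h2 : IntegrableOn (fun r => r ^ 2 * f r) s) :
    IntegrableOn (fun r => (α * r ^ 2 + β * r + δ) * f r) s := by
  refine (((h2.const_mul α).add (h1.const_mul β)).add (h0.const_mul δ)).congr
    (ae_of_all _ fun r => ?_)
  simp only [Pi.add_apply]
  ring

lemma integrableOn_quadratic_mul_staircaseProfile (hb : 0 < b) (hb1 : b < 1) (α β δ : ℝ) :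
    IntegrableOn (fun r => (α * r ^ 2 + β * r + δ) * staircaseProfile b γ r) (Set.Ioi 0) :=
  integrableOn_quadratic_mul α β δ
    (by simpa using integrableOn_pow_mul_staircaseProfile (γ := γ) hb hb1 0)
    (by simpa using integrableOn_pow_mul_staircaseProfile (γ := γ) hb hb1 1)
    (integrableOn_pow_mul_staircaseProfile hb hb1 2)

lemma integral_quadratic (α β δ s t : ℝ) :
    ∫ r in s..t, (α * r ^ 2 + β * r + δ) =
      α * (t ^ 3 - s ^ 3) / 3 + β * (t ^ 2 - s ^ 2) / 2 + δ * (t - s) := by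
  rw [intervalIntegral.integral_add, intervalIntegral.integral_add,
    intervalIntegral.integral_const_mul, intervalIntegral.integral_const_mul, integral_pow,
    integral_id, intervalIntegral.integral_const, smul_eq_mul]
  · push_cast
    ring
  all_goals exact Continuous.intervalIntegrable (by fun_prop) _ _

lemma staircaseMoment_eq_of_discountedDiff (hb : 0 < b) (hb1 : b < 1) (hγ0 : 0 ≤ γ) (hγ1 : γ ≤ 1)
    {n : ℕ} {α β δ : ℝ}
    (hG : ∀ r, discountedDiff b (fun v => α * v ^ 2 + β * v + δ) r = r ^ n) :
    staircaseMoment b γ n =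
      α * γ ^ 3 / 3 + β * γ ^ 2 / 2 + δ * γ +
        b * (α * (1 - γ ^ 3) / 3 + β * (1 - γ ^ 2) / 2 + δ * (1 - γ)) := by
  rw [staircaseMoment, ← funext fun r => congrArg (· * staircaseProfile b γ r) (hG r)]
  rw [integral_discountedDiff_mul_staircaseProfile hb.ne' hγ0 hγ1
    (integrableOn_quadratic_mul_staircaseProfile hb hb1 α β δ), integral_quadratic,
    integral_quadratic]
  ring

lemma staircaseMoment_one (hb : 0 < b) (hb1 : b < 1) (hγ0 : 0 ≤ γ) (hγ1 : γ ≤ 1) :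
    staircaseMoment b γ 1 =
      (γ ^ 2 + 2 * geomTail b * γ + geomTail b * (1 + 2 * geomTail b)) / 2 := by
  have hc := mul_one_add_geomTail hb1
  set c := geomTail b
  rw [staircaseMoment_eq_of_discountedDiff hb hb1 hγ0 hγ1 (α := 0) (β := 1 + c)
    (δ := (1 + c) * c)]
  · linear_combination ((1 - γ ^ 2) / 2 + c * (1 - γ)) * hc
  · intro r
    rw [discountedDiff]
    linear_combination -(r + 1 + c) * hc

lemma staircaseMoment_two (hb : 0 < b) (hb1 : b < 1) (hγ0 : 0 ≤ γ) (hγ1 : γ ≤ 1) :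
    staircaseMoment b γ 2 =
      γ ^ 3 / 3 + geomTail b * γ ^ 2 + geomTail b * (1 + 2 * geomTail b) * γ +
        geomTail b * (1 / 3 + 2 * geomTail b + 2 * geomTail b ^ 2) := by
  have hc := mul_one_add_geomTail hb1
  set c := geomTail b
  rw [staircaseMoment_eq_of_discountedDiff hb hb1 hγ0 hγ1 (α := 1 + c) (β := (1 + c) * (2 * c))
    (δ := (1 + c) * (c * (1 + 2 * c)))]
  · linear_combination
      ((1 - γ ^ 3) / 3 + c * (1 - γ ^ 2) + c * (1 + 2 * c) * (1 - γ)) * hc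
  · intro r
    rw [discountedDiff]
    linear_combination -((r + 1) ^ 2 + 2 * c * (r + 1) + c * (1 + 2 * c)) * hc

lemma staircaseMoment_pos (hb : 0 < b) (hb1 : b < 1) (n : ℕ) : 0 < staircaseMoment b γ n := by
  have hpos (r : ℝ) (hr : r ∈ Set.Ioi 0) : 0 < r ^ n * staircaseProfile b γ r :=
    mul_pos (pow_pos hr n) (staircaseProfile_pos hb r)
  rw [staircaseMoment, setIntegral_pos_iff_support_of_nonneg_ae
    (ae_restrict_of_forall_mem measurableSet_Ioi fun r hr => (hpos r hr).le)
    (integrableOn_pow_mul_staircaseProfile hb hb1 n),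
    Set.inter_eq_right.2 (Set.subset_def ▸ fun r hr => (hpos r hr).ne'), volume_Ioi]
  exact ENNReal.zero_lt_top

end Moments

/-- The quadratic dual certificate of the staircase with upper threshold `γ`. -/
def quadraticCertificate (b γ' γ r : ℝ) : ℝ := (1 + geomTail b) * (r - γ) * (r - γ')

/-- The thresholds of the optimal staircase: `γ` minimizes the ratio `N / M` of the second to the
first moment, and `γ'` is the second root of `quadraticCertificate`. The two equations say that the
certificate has discounted difference `r * (r - N / M)`. -/
structure IsOptimalThreshold (b γ' γ : ℝ) : Prop where
  lower_pos : 0 < γ'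
  lower_le_upper : γ' ≤ γ
  upper_lt_one : γ < 1
  add_geomTail_mul_add_geomTail :
    (γ + geomTail b) * (γ' + geomTail b) = geomTail b * (1 + geomTail b)
  staircaseMoment_two_eq :
    staircaseMoment b γ 2 = (γ + γ' + 2 * geomTail b) * staircaseMoment b γ 1

section OptimalThreshold

variable {b γ' γ : ℝ}

lemma integrableOn_quadraticCertificate_mul {f : ℝ → ℝ} {s : Set ℝ} (h0 : IntegrableOn f s)
    (h1 : IntegrableOn (fun r => r * f r) s) (h2 : IntegrableOn (fun r => r ^ 2 * f r) s) :
    IntegrableOn (fun r => quadraticCertificate b γ' γ r * f r) s := by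
  refine (integrableOn_quadratic_mul (1 + geomTail b) (-(1 + geomTail b) * (γ + γ'))
    ((1 + geomTail b) * (γ * γ')) h0 h1 h2).congr (ae_of_all _ fun r => ?_)
  simp only [quadraticCertificate]
  ring

-- In the variable `u = γ + c`, with `c = geomTail b`, the two equations of `IsOptimalThreshold`
-- combine to this quartic.
lemma exists_root_quartic {c : ℝ} (hc : 0 < c) :
    ∃ u, √(c * (1 + c)) < u ∧ u < 1 + c ∧
      u ^ 4 + 3 * (c * (1 + c)) ^ 2 - 2 * (c * (1 + c)) * (1 + 2 * c) * u = 0 := by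
  have hq : 0 < c * (1 + c) := by positivity
  have hsq : √(c * (1 + c)) ^ 2 = c * (1 + c) := sq_sqrt hq.le
  have hs : 0 < √(c * (1 + c)) := sqrt_pos.2 hq
  have hAMGM : 2 * √(c * (1 + c)) < 1 + 2 * c := lt_of_pow_lt_pow_left₀ 2 (by positivity) (by
    rw [mul_pow, hsq]; linarith)
  have hle : √(c * (1 + c)) ≤ 1 + c := by linarith
  set s := √(c * (1 + c))
  let Φ : ℝ → ℝ := fun u =>
    u ^ 4 + 3 * (c * (1 + c)) ^ 2 - 2 * (c * (1 + c)) * (1 + 2 * c) * u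
  have hleft : Φ s < 0 := by
    have : Φ s = 2 * s ^ 3 * (2 * s - (1 + 2 * c)) := by simp only [Φ, ← hsq]; ring
    rw [this]
    exact mul_neg_of_pos_of_neg (by positivity) (by linarith)
  have hright : 0 < Φ (1 + c) := by
    have : Φ (1 + c) = (1 + c) ^ 2 := by simp only [Φ]; ring
    rw [this]
    positivity
  obtain ⟨u, hu, hroot⟩ := intermediate_value_Ioo hle
    (Continuous.continuousOn (by fun_prop : Continuous Φ)) ⟨hleft, hright⟩
  exact ⟨u, hu.1, hu.2, hroot⟩

lemma exists_isOptimalThreshold (hb : 0 < b) (hb1 : b < 1) :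
    ∃ γ' γ, IsOptimalThreshold b γ' γ := by
  have hc := geomTail_pos hb hb1
  obtain ⟨u, hsu, hu, hroot⟩ := exists_root_quartic hc
  set c := geomTail b with hc_def
  have hu0 : 0 < u := (sqrt_nonneg _).trans_lt hsu
  have hqu : c * (1 + c) < u ^ 2 := (sqrt_lt' hu0).1 hsu
  have hlower : c < c * (1 + c) / u := (lt_div_iff₀ hu0).2 (mul_lt_mul_of_pos_left hu hc)
  have hle : c * (1 + c) / u ≤ u := (div_le_iff₀ hu0).2 (by linarith)
  refine ⟨c * (1 + c) / u - c, u - c, by linarith, by linarith, by linarith, ?_, ?_⟩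
  · rw [← hc_def]
    field_simp
    ring
  · rw [staircaseMoment_one hb hb1 (by linarith) (by linarith),
      staircaseMoment_two hb hb1 (by linarith) (by linarith), ← hc_def]
    field_simp
    linear_combination -hroot

namespace IsOptimalThreshold

lemma upper_pos (h : IsOptimalThreshold b γ' γ) : 0 < γ := h.lower_pos.trans_le h.lower_le_upper

lemma discountedDiff_eq (h : IsOptimalThreshold b γ' γ) (hb1 : b < 1) (r : ℝ) :
    discountedDiff b (quadraticCertificate b γ' γ) r =
      r * (r - (γ + γ' + 2 * geomTail b)) := by
  have hc := mul_one_add_geomTail hb1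
  have hprod := h.add_geomTail_mul_add_geomTail
  simp only [discountedDiff, quadraticCertificate]
  linear_combination -((r + 1 - γ) * (r + 1 - γ')) * hc + hprod

lemma isDualCertificate (h : IsOptimalThreshold b γ' γ) (hb : 0 < b) (hb1 : b < 1) :
    IsDualCertificate b γ' γ (quadraticCertificate b γ' γ) := by
  have hc := geomTail_pos hb hb1
  have hγ' := h.lower_pos
  have hγ'γ := h.lower_le_upper
  have hcont : Continuous (quadraticCertificate b γ' γ) := by
    unfold quadraticCertificate
    fun_prop
  refine ⟨hcont, hγ', hγ'γ, h.upper_lt_one.le, fun r _ hr => ?_, fun r hr => ?_,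
    fun r hr => ?_, fun r hr0 hrγ => ?_⟩
  · exact mul_nonneg_of_nonpos_of_nonpos
      (mul_nonpos_of_nonneg_of_nonpos (by linarith) (by linarith)) (by linarith)
  · exact mul_nonpos_of_nonpos_of_nonneg
      (mul_nonpos_of_nonneg_of_nonpos (by linarith) (by linarith [hr.2])) (by linarith [hr.1])
  · exact mul_nonneg (mul_nonneg (by linarith) (by linarith)) (by linarith)
  · rw [h.discountedDiff_eq hb1]
    exact mul_nonpos_of_nonneg_of_nonpos hr0 (by linarith)

lemma boundary_eq_zero (h : IsOptimalThreshold b γ' γ) (hb : 0 < b) (hb1 : b < 1) :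
    (∫ r in 0..γ, quadraticCertificate b γ' γ r) +
      b * ∫ r in γ..1, quadraticCertificate b γ' γ r = 0 := by
  have hint (n : ℕ) := integrableOn_pow_mul_staircaseProfile (γ := γ) hb hb1 n
  have hG : IntegrableOn
      (fun r => quadraticCertificate b γ' γ r * staircaseProfile b γ r) (Set.Ioi 0) :=
    integrableOn_quadraticCertificate_mul (by simpa using hint 0) (by simpa using hint 1) (hint 2)
  rw [← integral_discountedDiff_mul_staircaseProfile hb.ne' h.upper_pos.le h.upper_lt_one.le hG]
  calc
    _ = ∫ r in Set.Ioi 0, (r ^ 2 * staircaseProfile b γ r -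
          (γ + γ' + 2 * geomTail b) * (r ^ 1 * staircaseProfile b γ r)) := by
      simp only [h.discountedDiff_eq hb1]
      congr! 2 with r
      ring
    _ = staircaseMoment b γ 2 - (γ + γ' + 2 * geomTail b) * staircaseMoment b γ 1 := by
      rw [integral_sub (hint 2) ((hint 1).const_mul _), integral_const_mul]
      rfl
    _ = 0 := sub_eq_zero.2 h.staircaseMoment_two_eq

end IsOptimalThreshold

lemma IsRadiallyPrivate.integrableOn {p : ℝ → ℝ} (hp : IsRadiallyPrivate b p) (hb : 0 < b)
    (hb1 : b < 1) (hrp : IntegrableOn (fun r => r * p r) (Set.Ioi 0)) :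
    IntegrableOn p (Set.Ioi 0) := by
  have hmeas : AEStronglyMeasurable p (volume.restrict (Set.Ioi 0)) := by
    refine (measurable_inv.aestronglyMeasurable.mul hrp.aestronglyMeasurable).congr ?_
    filter_upwards [ae_restrict_mem measurableSet_Ioi] with r (hr : 0 < r)
    simp [hr.ne']
  have hnear : IntegrableOn p (Set.Ioc 0 1) := by
    refine (integrable_const (p 1 / b)).mono' (hmeas.mono_set Set.Ioc_subset_Ioi_self) ?_
    filter_upwards [ae_restrict_mem measurableSet_Ioc] with r hr
    rw [norm_of_nonneg (hp.nonneg hb1 hr.1), le_div_iff₀' hb]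
    exact hp r 1 hr.1 one_pos (abs_le.2 ⟨by linarith [hr.1], by linarith [hr.2]⟩)
  have hsubset : Set.Ioi (1 : ℝ) ⊆ Set.Ioi 0 := Set.Ioi_subset_Ioi zero_le_one
  have hfar : IntegrableOn p (Set.Ioi 1) := by
    refine (hrp.mono_set hsubset).mono' (hmeas.mono_set hsubset) ?_
    filter_upwards [ae_restrict_mem measurableSet_Ioi] with r (hr : 1 < r)
    have hpr := hp.nonneg hb1 (one_pos.trans hr)
    rw [norm_of_nonneg hpr]
    exact le_mul_of_one_le_left hpr hr.le
  simpa [Set.Ioc_union_Ioi_eq_Ioi zero_le_one] using hnear.union hfar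

lemma exists_staircaseMoment_mul_integral_le (hb : 0 < b) (hb1 : b < 1) :
    ∃ γ ∈ Set.Icc (0 : ℝ) 1, ∀ p, IsRadiallyPrivate b p →
      IntegrableOn (fun r => r * p r) (Set.Ioi 0) →
      IntegrableOn (fun r => r ^ 2 * p r) (Set.Ioi 0) →
      staircaseMoment b γ 2 * ∫ r in Set.Ioi 0, r * p r ≤
        staircaseMoment b γ 1 * ∫ r in Set.Ioi 0, r ^ 2 * p r := by
  obtain ⟨γ', γ, h⟩ := exists_isOptimalThreshold hb hb1
  have hγ : γ ∈ Set.Icc 0 1 := ⟨h.upper_pos.le, h.upper_lt_one.le⟩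
  refine ⟨γ, hγ, fun p hp hrp hr2p => ?_⟩
  have hdiff (r : ℝ) : discountedDiff b (quadraticCertificate b γ' γ) r * p r =
      r ^ 2 * p r - (γ + γ' + 2 * geomTail b) * (r * p r) := by
    rw [h.discountedDiff_eq hb1]
    ring
  have hGp := integrableOn_quadraticCertificate_mul (b := b) (γ' := γ') (γ := γ)
    (hp.integrableOn hb hb1 hrp) hrp hr2p
  have hwp : IntegrableOn (fun r => discountedDiff b (quadraticCertificate b γ' γ) r * p r)
      (Set.Ioi 0) := by
    simp only [hdiff]
    exact hr2p.sub (hrp.const_mul _)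
  obtain ⟨m, -, hm⟩ := (h.isDualCertificate hb hb1).exists_mul_le_integral hp hb hb1 hGp hwp
  rw [h.boundary_eq_zero hb hb1, zero_mul] at hm
  simp only [hdiff] at hm
  rw [integral_sub hr2p (hrp.const_mul _), integral_const_mul, sub_nonneg] at hm
  rw [h.staircaseMoment_two_eq, mul_comm _ (staircaseMoment b γ 1), mul_assoc]
  exact mul_le_mul_of_nonneg_left hm (staircaseMoment_pos hb hb1 1).le

end OptimalThreshold

/-! ### Polar coordinates -/

lemma integrableOn_Ioi_pow_mul_comp_div_iff {Δ : ℝ} (hΔ : 0 < Δ) (n : ℕ) (g : ℝ → ℝ) :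
    IntegrableOn (fun r => r ^ n * g (r / Δ)) (Set.Ioi 0) ↔
      IntegrableOn (fun r => r ^ n * g r) (Set.Ioi 0) := by
  rw [← mul_zero Δ, ← integrableOn_Ioi_comp_mul_left_iff _ _ hΔ, mul_zero]
  simp only [mul_div_cancel_left₀ _ hΔ.ne', mul_pow, mul_assoc]
  exact integrable_const_mul_iff (pow_pos hΔ n).ne'.isUnit _

lemma integral_Ioi_pow_mul_comp_div {Δ : ℝ} (hΔ : 0 < Δ) (n : ℕ) (g : ℝ → ℝ) :
    ∫ r in Set.Ioi 0, r ^ n * g (r / Δ) = Δ ^ (n + 1) * ∫ r in Set.Ioi 0, r ^ n * g r := by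
  have h := integral_comp_mul_left_Ioi (fun r => r ^ n * g (r / Δ)) 0 hΔ
  simp only [mul_div_cancel_left₀ _ hΔ.ne', mul_pow, mul_assoc, integral_const_mul, mul_zero,
    smul_eq_mul] at h
  rw [pow_succ', mul_assoc, h, mul_inv_cancel_left₀ hΔ.ne']

lemma integral_volumeIoiPow (n : ℕ) (g : ℝ → ℝ) :
    ∫ r, g r ∂Measure.volumeIoiPow n = ∫ r in Set.Ioi 0, r ^ n * g r := by
  simp only [Measure.volumeIoiPow, ENNReal.ofReal]
  rw [integral_withDensity_eq_integral_smul (measurable_subtype_coe.pow_const _).real_toNNReal,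
    integral_subtype_comap measurableSet_Ioi fun r => (r ^ n).toNNReal • g r]
  refine setIntegral_congr_fun measurableSet_Ioi fun r (hr : 0 < r) => ?_
  simp [NNReal.smul_def, hr.le]

lemma integrable_volumeIoiPow_iff (n : ℕ) (g : ℝ → ℝ) :
    Integrable (fun r : Set.Ioi (0 : ℝ) => g r) (Measure.volumeIoiPow n) ↔
      IntegrableOn (fun r => r ^ n * g r) (Set.Ioi 0) := by
  rw [integrableOn_iff_comap_subtypeVal measurableSet_Ioi, Measure.volumeIoiPow,
    integrable_withDensity_iff_integrable_smul' (by fun_prop) (by simp)]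
  refine integrable_congr (ae_of_all _ fun ⟨r, hr⟩ => ?_)
  have : 0 < r := hr
  simp [ENNReal.toReal_ofReal, this.le]

section Polar

variable {E : Type*} [NormedAddCommGroup E] [NormedSpace ℝ E] [MeasurableSpace E]

/-- The integral of `f` over the sphere of radius `r`, with respect to the angular measure. -/
def sphericalIntegral (μ : Measure E) (f : E → ℝ) (r : ℝ) : ℝ :=
  ∫ u, f (r • (u : E)) ∂μ.toSphere

lemma sphericalIntegral_norm_pow_mul (μ : Measure E) (f : E → ℝ) (n : ℕ) {r : ℝ} (hr : 0 ≤ r) :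
    sphericalIntegral μ (fun x => ‖x‖ ^ n * f x) r = r ^ n * sphericalIntegral μ f r := by
  simp [sphericalIntegral, norm_smul, abs_of_nonneg hr, integral_const_mul]

variable [BorelSpace E] [FiniteDimensional ℝ E] [Nontrivial E] {f : E → ℝ} (μ : Measure E)
  [μ.IsAddHaarMeasure]

lemma measurePreserving_smul_toSphere_prod_volumeIoiPow :
    MeasurePreserving
      (fun z : Metric.sphere (0 : E) 1 × Set.Ioi (0 : ℝ) => (z.2 : ℝ) • (z.1 : E))
      (μ.toSphere.prod (Measure.volumeIoiPow (Module.finrank ℝ E - 1))) μ := by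
  have hpolar := MeasurePreserving.symm (homeomorphUnitSphereProd E).toMeasurableEquiv
    μ.measurePreserving_homeomorphUnitSphereProd
  have hcoe := measurePreserving_subtype_coe (μa := μ) (measurableSet_singleton (0 : E)).compl
  rw [restrict_compl_singleton] at hcoe
  exact hcoe.comp hpolar

variable {μ}

lemma integrable_smul_toSphere_prod_volumeIoiPow (hf : Integrable f μ) :
    Integrable (fun z : Metric.sphere (0 : E) 1 × Set.Ioi (0 : ℝ) => f ((z.2 : ℝ) • (z.1 : E)))
      (μ.toSphere.prod (Measure.volumeIoiPow (Module.finrank ℝ E - 1))) :=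
  (measurePreserving_smul_toSphere_prod_volumeIoiPow μ).integrable_comp_of_integrable hf

lemma integrableOn_pow_mul_sphericalIntegral (hf : Integrable f μ) :
    IntegrableOn (fun r => r ^ (Module.finrank ℝ E - 1) * sphericalIntegral μ f r) (Set.Ioi 0) := by
  rw [← integrable_volumeIoiPow_iff]
  exact (integrable_smul_toSphere_prod_volumeIoiPow hf).integral_prod_right

lemma integral_eq_integral_pow_mul_sphericalIntegral (hf : Integrable f μ) :
    ∫ x, f x ∂μ =
      ∫ r in Set.Ioi 0, r ^ (Module.finrank ℝ E - 1) * sphericalIntegral μ f r := by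
  have hpolar := measurePreserving_smul_toSphere_prod_volumeIoiPow μ
  rw [← integral_volumeIoiPow, ← hpolar.map_eq, integral_map hpolar.aemeasurable
    (by rw [hpolar.map_eq]; exact hf.aestronglyMeasurable),
    integral_prod_symm _ (integrable_smul_toSphere_prod_volumeIoiPow hf)]
  simp only [hpolar.map_eq, sphericalIntegral]

end Polar

/-! ### Private densities -/

/-- The `ε`-differential-privacy constraint at sensitivity `Δ`, for a density. -/
def IsPrivateDensity {E : Type*} [NormedAddCommGroup E] (ε Δ : ℝ) (f : E → ℝ) : Prop :=
  ∀ x t, ‖t‖ ≤ Δ → exp (-ε) * f x ≤ f (x + t)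

section PrivateDensity

variable {E : Type*} [NormedAddCommGroup E] [NormedSpace ℝ E] [MeasurableSpace E] [BorelSpace E]
  [FiniteDimensional ℝ E] {μ : Measure E} [μ.IsAddHaarMeasure] {ε Δ : ℝ} {f : E → ℝ}

lemma integrable_smul_toSphere (hf : Measurable f) {C : ℝ} (hC : ∀ x, ‖f x‖ ≤ C) (r : ℝ) :
    Integrable (fun u : Metric.sphere (0 : E) 1 => f (r • (u : E))) μ.toSphere :=
  .of_bound (hf.comp (by fun_prop)).aestronglyMeasurable C (ae_of_all _ fun _ => hC _)

lemma IsPrivateDensity.isRadiallyPrivate (hpriv : IsPrivateDensity ε Δ f) (hΔ : 0 ≤ Δ)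
    (hf : Measurable f) {C : ℝ} (hC : ∀ x, ‖f x‖ ≤ C) :
    IsRadiallyPrivate (exp (-ε)) fun r => sphericalIntegral μ f (Δ * r) := by
  intro r s _ _ hrs
  simp only [sphericalIntegral, ← integral_const_mul]
  refine integral_mono ((integrable_smul_toSphere hf hC _).const_mul _)
    (integrable_smul_toSphere hf hC _) fun u => ?_
  have hdist : ‖(Δ * (s - r)) • (u : E)‖ ≤ Δ := by
    rw [norm_smul, norm_eq_of_mem_sphere, mul_one, norm_mul, norm_of_nonneg hΔ, norm_sub_rev]
    exact mul_le_of_le_one_right hΔ hrs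
  have hsum : (Δ * r) • (u : E) + (Δ * (s - r)) • (u : E) = (Δ * s) • (u : E) := by
    rw [← add_smul]
    ring_nf
  simpa only [hsum] using hpriv ((Δ * r) • (u : E)) ((Δ * (s - r)) • (u : E)) hdist

lemma integrableOn_pow_mul_sphericalIntegral_comp_mul [Nontrivial E] (hΔ : 0 < Δ) {n k : ℕ}
    (hn : n = Module.finrank ℝ E - 1 + k) (hf : Integrable (fun x => ‖x‖ ^ k * f x) μ) :
    IntegrableOn (fun r => r ^ n * sphericalIntegral μ f (Δ * r)) (Set.Ioi 0) := by
  rw [← integrableOn_Ioi_pow_mul_comp_div_iff hΔ]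
  refine (integrableOn_pow_mul_sphericalIntegral hf).congr_fun (fun r (hr : 0 < r) => ?_)
    measurableSet_Ioi
  simp only [sphericalIntegral_norm_pow_mul μ f k hr.le, hn, mul_div_cancel₀ r hΔ.ne']
  ring

lemma integral_pow_mul_sphericalIntegral_comp_mul [Nontrivial E] (hΔ : 0 < Δ) {n k : ℕ}
    (hn : n = Module.finrank ℝ E - 1 + k) (hf : Integrable (fun x => ‖x‖ ^ k * f x) μ) :
    Δ ^ (n + 1) * ∫ r in Set.Ioi 0, r ^ n * sphericalIntegral μ f (Δ * r) =
      ∫ x, ‖x‖ ^ k * f x ∂μ := by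
  rw [← integral_Ioi_pow_mul_comp_div hΔ, integral_eq_integral_pow_mul_sphericalIntegral hf]
  refine setIntegral_congr_fun measurableSet_Ioi fun r (hr : 0 < r) => ?_
  simp only [sphericalIntegral_norm_pow_mul μ f k hr.le, hn, mul_div_cancel₀ r hΔ.ne']
  ring

lemma exists_staircaseMoment_mul_integral_density_le (hdim : Module.finrank ℝ E = 2)
    (hε : 0 < ε) (hΔ : 0 < Δ) (μ : Measure E) [μ.IsAddHaarMeasure] :
    ∃ γ ∈ Set.Icc (0 : ℝ) 1, ∀ f : E → ℝ, IsPrivateDensity ε Δ f → Measurable f →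
      (∃ C, ∀ x, ‖f x‖ ≤ C) → Integrable f μ → Integrable (fun x => ‖x‖ * f x) μ →
      Δ * staircaseMoment (exp (-ε)) γ 2 * ∫ x, f x ∂μ ≤
        staircaseMoment (exp (-ε)) γ 1 * ∫ x, ‖x‖ * f x ∂μ := by
  have : Nontrivial E := Module.nontrivial_of_finrank_pos (R := ℝ) (by omega)
  obtain ⟨γ, hγ, hopt⟩ := exists_staircaseMoment_mul_integral_le (exp_pos (-ε))
    (exp_lt_one_iff.2 (neg_neg_of_pos hε))
  refine ⟨γ, hγ, fun f hpriv hf ⟨C, hC⟩ hint0 hint1 => ?_⟩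
  replace hint0 : Integrable (fun x => ‖x‖ ^ 0 * f x) μ := by simpa using hint0
  replace hint1 : Integrable (fun x => ‖x‖ ^ 1 * f x) μ := by simpa using hint1
  have hn0 : 1 = Module.finrank ℝ E - 1 + 0 := by omega
  have hn1 : 2 = Module.finrank ℝ E - 1 + 1 := by omega
  have hmass := integral_pow_mul_sphericalIntegral_comp_mul hΔ hn0 hint0
  have hcost := integral_pow_mul_sphericalIntegral_comp_mul hΔ hn1 hint1
  have hray := hopt _ (hpriv.isRadiallyPrivate (μ := μ) hΔ.le hf hC)
    (by simpa using integrableOn_pow_mul_sphericalIntegral_comp_mul hΔ hn0 hint0)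
    (integrableOn_pow_mul_sphericalIntegral_comp_mul hΔ hn1 hint1)
  simp only [pow_zero, pow_one, one_mul] at hmass hcost
  rw [← hmass, ← hcost]
  linear_combination Δ ^ 3 * hray

end PrivateDensity

/-! ### Mollification -/

/-- The `ε`-differential-privacy constraint at sensitivity `Δ`, for a measure. -/
def IsDifferentiallyPrivate {E : Type*} [NormedAddCommGroup E] [MeasurableSpace E] (ε Δ : ℝ)
    (ν : Measure E) : Prop :=
  ∀ S, MeasurableSet S → ∀ t, ‖t‖ ≤ Δ → ν S ≤ ENNReal.ofReal (exp ε) * ν ((· + t) '' S)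

/-- The density with respect to a translation-invariant `μ` of the convolution of `ν` with the
uniform distribution on the ball of radius `η`. -/
def mollifiedDensity {E : Type*} [NormedAddCommGroup E] [MeasurableSpace E] (μ ν : Measure E)
    (η : ℝ) (x : E) : ℝ≥0∞ :=
  ν (Metric.closedBall x η) / μ (Metric.closedBall 0 η)

section Mollification

variable {E : Type*} [NormedAddCommGroup E] [MeasurableSpace E] {μ ν : Measure E} {ε Δ η : ℝ}

lemma mollifiedDensity_le_inv [IsProbabilityMeasure ν] (x : E) :
    mollifiedDensity μ ν η x ≤ (μ (Metric.closedBall 0 η))⁻¹ := by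
  rw [← one_div]
  exact ENNReal.div_le_div_right prob_le_one _

variable [BorelSpace E]

lemma IsDifferentiallyPrivate.mollifiedDensity_le (hν : IsDifferentiallyPrivate ε Δ ν) (x t : E)
    (ht : ‖t‖ ≤ Δ) :
    mollifiedDensity μ ν η x ≤ ENNReal.ofReal (exp ε) * mollifiedDensity μ ν η (x + t) := by
  have himage : (· + t) '' Metric.closedBall x η = Metric.closedBall (x + t) η := by
    simp
  have hball := hν _ (Metric.isClosed_closedBall (x := x) (ε := η)).measurableSet t ht
  rw [himage] at hball
  rw [mollifiedDensity, mollifiedDensity, ← mul_div_assoc]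
  gcongr

variable [ProperSpace E]

lemma measurable_mollifiedDensity [SFinite ν] : Measurable (mollifiedDensity μ ν η) := by
  have hball : MeasurableSet {z : E × E | dist z.2 z.1 ≤ η} :=
    measurableSet_le (by fun_prop) measurable_const
  exact (measurable_measure_prodMk_left hball).div_const _

variable [μ.IsAddHaarMeasure]

lemma lintegral_mul_mollifiedDensity [SFinite ν] {k : E → ℝ≥0∞} (hk : Measurable k) :
    ∫⁻ x, k x * mollifiedDensity μ ν η x ∂μ =
      ∫⁻ y, ⨍⁻ x in Metric.closedBall y η, k x ∂μ ∂ν := by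
  set c := μ (Metric.closedBall 0 η) with hc
  have hball : MeasurableSet {z : E × E | dist z.2 z.1 ≤ η} :=
    measurableSet_le (by fun_prop) measurable_const
  have hslice (x y : E) :
      (Metric.closedBall x η).indicator (fun _ => k x / c) y =
        (Metric.closedBall y η).indicator (fun x => k x / c) x := by
    simp only [Set.indicator, Metric.mem_closedBall, dist_comm]
  calc
    _ = ∫⁻ x, ∫⁻ y, (Metric.closedBall x η).indicator (fun _ => k x / c) y ∂ν ∂μ := by
      refine lintegral_congr fun x => ?_
      rw [lintegral_indicator_const Metric.isClosed_closedBall.measurableSet, mollifiedDensity,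
        ← hc, ENNReal.mul_comm_div]
    _ = ∫⁻ y, ∫⁻ x, (Metric.closedBall x η).indicator (fun _ => k x / c) y ∂μ ∂ν := by
      refine lintegral_lintegral_swap (Measurable.aemeasurable ?_)
      exact ((hk.div_const c).comp measurable_fst).indicator hball
    _ = _ := by
      refine lintegral_congr fun y => ?_
      simp only [hslice]
      rw [lintegral_indicator Metric.isClosed_closedBall.measurableSet, setLAverage_eq,
        μ.addHaar_closedBall_center y]
      simp only [div_eq_mul_inv, lintegral_mul_const _ hk, hc]

variable [IsProbabilityMeasure ν]

lemma lintegral_mollifiedDensity (hη : 0 < η) : ∫⁻ x, mollifiedDensity μ ν η x ∂μ = 1 := by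
  have h := lintegral_mul_mollifiedDensity (μ := μ) (ν := ν) (η := η) (k := 1) measurable_one
  simpa [setLAverage_one (Metric.measure_closedBall_pos μ _ hη).ne' measure_closedBall_lt_top.ne]
    using h

lemma lintegral_norm_mul_mollifiedDensity_le (hη : 0 < η) :
    ∫⁻ x, ENNReal.ofReal ‖x‖ * mollifiedDensity μ ν η x ∂μ ≤
      ∫⁻ x, ENNReal.ofReal ‖x‖ ∂ν + ENNReal.ofReal η := by
  have haverage (y : E) : ⨍⁻ x in Metric.closedBall y η, ENNReal.ofReal ‖x‖ ∂μ ≤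
      ENNReal.ofReal ‖y‖ + ENNReal.ofReal η := by
    rw [← setLAverage_const (Metric.measure_closedBall_pos μ y hη).ne'
      measure_closedBall_lt_top.ne (ENNReal.ofReal ‖y‖ + ENNReal.ofReal η)]
    refine laverage_mono_ae (ae_restrict_of_forall_mem
      Metric.isClosed_closedBall.measurableSet fun x hx => ?_)
    rw [← ENNReal.ofReal_add (norm_nonneg y) hη.le]
    exact ENNReal.ofReal_le_ofReal (norm_le_of_mem_closedBall hx)
  calc
    _ = ∫⁻ y, ⨍⁻ x in Metric.closedBall y η, ENNReal.ofReal ‖x‖ ∂μ ∂ν :=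
      lintegral_mul_mollifiedDensity (by fun_prop)
    _ ≤ ∫⁻ y, (ENNReal.ofReal ‖y‖ + ENNReal.ofReal η) ∂ν := lintegral_mono haverage
    _ = _ := by simp [lintegral_add_right]

end Mollification

lemma isPrivateDensity_toReal {E : Type*} [NormedAddCommGroup E] {ε Δ : ℝ} {f : E → ℝ≥0∞}
    (hfin : ∀ x, f x ≠ ∞)
    (hpriv : ∀ x t, ‖t‖ ≤ Δ → f x ≤ ENNReal.ofReal (exp ε) * f (x + t)) :
    IsPrivateDensity ε Δ fun x => (f x).toReal := by
  intro x t ht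
  have h := ENNReal.toReal_mono (ENNReal.mul_ne_top ENNReal.ofReal_ne_top (hfin _)) (hpriv x t ht)
  rw [ENNReal.toReal_mul, ENNReal.toReal_ofReal (exp_pos ε).le] at h
  rwa [exp_neg, inv_mul_le_iff₀ (exp_pos ε)]

section LowerBound

variable {E : Type*} [NormedAddCommGroup E] [NormedSpace ℝ E] [MeasurableSpace E] [BorelSpace E]
  [FiniteDimensional ℝ E] {ε Δ : ℝ}

lemma exists_ofReal_le_lintegral_norm_mul (hdim : Module.finrank ℝ E = 2)
    (hε : 0 < ε) (hΔ : 0 < Δ) (μ : Measure E) [μ.IsAddHaarMeasure] :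
    ∃ γ ∈ Set.Icc (0 : ℝ) 1, ∀ f : E → ℝ≥0∞,
      (∀ x t, ‖t‖ ≤ Δ → f x ≤ ENNReal.ofReal (exp ε) * f (x + t)) → Measurable f →
      (∃ C ≠ ∞, ∀ x, f x ≤ C) → ∫⁻ x, f x ∂μ = 1 →
      ENNReal.ofReal
          (Δ * staircaseMoment (exp (-ε)) γ 2 / staircaseMoment (exp (-ε)) γ 1) ≤
        ∫⁻ x, ENNReal.ofReal ‖x‖ * f x ∂μ := by
  obtain ⟨γ, hγ, hopt⟩ := exists_staircaseMoment_mul_integral_density_le hdim hε hΔ μ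
  refine ⟨γ, hγ, fun f hpriv hf ⟨C, hC, hfC⟩ hmass => ?_⟩
  have hfin (x : E) : f x ≠ ∞ := ne_top_of_le_ne_top hC (hfC x)
  have hcost (x : E) : (ENNReal.ofReal ‖x‖ * f x).toReal = ‖x‖ * (f x).toReal := by simp
  have hmeas : Measurable fun x => ENNReal.ofReal ‖x‖ * f x := by fun_prop
  by_cases htop : ∫⁻ x, ENNReal.ofReal ‖x‖ * f x ∂μ = ∞
  · exact htop ▸ le_top
  have h := hopt _ (isPrivateDensity_toReal hfin hpriv) hf.ennreal_toReal
    ⟨C.toReal, fun x => by simpa using ENNReal.toReal_mono hC (hfC x)⟩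
    (integrable_toReal_of_lintegral_ne_top hf.aemeasurable (by simp [hmass]))
    (by simpa only [hcost] using integrable_toReal_of_lintegral_ne_top hmeas.aemeasurable htop)
  simp only [← hcost] at h
  rw [integral_toReal hf.aemeasurable (ae_of_all _ fun x => (hfin x).lt_top),
    integral_toReal hmeas.aemeasurable (ae_lt_top hmeas htop), hmass, ENNReal.toReal_one,
    mul_one] at h
  rw [ENNReal.ofReal_le_iff_le_toReal htop, div_le_iff₀' (staircaseMoment_pos (exp_pos _)
    (exp_lt_one_iff.2 (neg_neg_of_pos hε)) 1)]
  exact h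

lemma exists_ofReal_le_lintegral_norm (hdim : Module.finrank ℝ E = 2)
    (hε : 0 < ε) (hΔ : 0 < Δ) :
    ∃ γ ∈ Set.Icc (0 : ℝ) 1, ∀ ν : Measure E, IsProbabilityMeasure ν →
      IsDifferentiallyPrivate ε Δ ν →
      ENNReal.ofReal
          (Δ * staircaseMoment (exp (-ε)) γ 2 / staircaseMoment (exp (-ε)) γ 1) ≤
        ∫⁻ x, ENNReal.ofReal ‖x‖ ∂ν := by
  let μ : Measure E := Measure.addHaar
  obtain ⟨γ, hγ, hopt⟩ := exists_ofReal_le_lintegral_norm_mul hdim hε hΔ μ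
  refine ⟨γ, hγ, fun ν _ hν => ENNReal.le_of_forall_pos_le_add fun η hη _ => ?_⟩
  have hη' : (0 : ℝ) < η := hη
  refine (hopt (mollifiedDensity μ ν η) hν.mollifiedDensity_le measurable_mollifiedDensity
    ⟨_, ENNReal.inv_ne_top.2 (Metric.measure_closedBall_pos μ 0 hη').ne', mollifiedDensity_le_inv⟩
    (lintegral_mollifiedDensity hη')).trans ?_
  simpa using lintegral_norm_mul_mollifiedDensity_le (μ := μ) (ν := ν) hη'

end LowerBound

/-! ### The staircase mechanism -/

/-- The probability density proportional to the staircase with steps of width `Δ`. -/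
def staircaseDensity {E : Type*} [NormedAddCommGroup E] [MeasurableSpace E] (μ : Measure E)
    (ε Δ γ : ℝ) (x : E) : ℝ :=
  staircaseProfile (exp (-ε)) γ (‖x‖ / Δ) / ∫ y, staircaseProfile (exp (-ε)) γ (‖y‖ / Δ) ∂μ

section WithDensity

variable {E : Type*} [NormedAddCommGroup E] [MeasurableSpace E] [BorelSpace E]
  {μ : Measure E} {ε Δ : ℝ} {f : E → ℝ}

lemma IsPrivateDensity.isDifferentiallyPrivate_withDensity [μ.IsAddRightInvariant]
    (hpriv : IsPrivateDensity ε Δ f) (hf : Measurable f) :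
    IsDifferentiallyPrivate ε Δ (μ.withDensity fun x => ENNReal.ofReal (f x)) := by
  intro S hS t ht
  have hdensity (x : E) :
      ENNReal.ofReal (f x) ≤ ENNReal.ofReal (exp ε) * ENNReal.ofReal (f (x + t)) := by
    rw [← ENNReal.ofReal_mul (exp_pos ε).le]
    refine ENNReal.ofReal_le_ofReal ?_
    rw [← inv_mul_le_iff₀ (exp_pos ε), ← exp_neg]
    exact hpriv x t ht
  have htranslate := (measurePreserving_add_right μ t).setLIntegral_comp_emb
    (measurableEmbedding_addRight t) (fun x => ENNReal.ofReal (f x)) S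
  have himage := (measurableEmbedding_addRight t).measurableSet_image.2 hS
  rw [withDensity_apply _ hS, withDensity_apply _ himage, ← htranslate,
    ← lintegral_const_mul _ (by fun_prop)]
  exact lintegral_mono hdensity

end WithDensity

section StaircaseDensity

variable {E : Type*} [NormedAddCommGroup E] [MeasurableSpace E] {μ : Measure E} {ε Δ γ : ℝ}

lemma isPrivateDensity_staircaseDensity (hε : 0 ≤ ε) (hΔ : 0 < Δ) :
    IsPrivateDensity ε Δ (staircaseDensity μ ε Δ γ) := by
  intro x t ht
  have hnorm : ‖x + t‖ / Δ ≤ ‖x‖ / Δ + 1 := by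
    rw [div_add_one hΔ.ne']
    gcongr
    exact (norm_add_le x t).trans (by gcongr)
  have hstep := antitone_staircaseProfile (γ := γ) (exp_pos (-ε))
    (exp_le_one_iff.2 (neg_nonpos.2 hε)) hnorm
  rw [staircaseProfile_add_one (exp_pos _).ne'] at hstep
  rw [staircaseDensity, staircaseDensity, ← mul_div_assoc]
  gcongr
  exact integral_nonneg fun _ => (staircaseProfile_pos (exp_pos _) _).le

variable [OpensMeasurableSpace E]

lemma measurable_staircaseDensity : Measurable (staircaseDensity μ ε Δ γ) :=
  ((measurable_staircaseProfile _ _).comp (measurable_norm.div_const Δ)).div_const _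

lemma lintegral_norm_withDensity_staircaseDensity :
    ∫⁻ x, ENNReal.ofReal ‖x‖ ∂μ.withDensity (fun x => ENNReal.ofReal (staircaseDensity μ ε Δ γ x)) =
      ∫⁻ x, ENNReal.ofReal (‖x‖ * staircaseDensity μ ε Δ γ x) ∂μ := by
  rw [lintegral_withDensity_eq_lintegral_mul _ measurable_staircaseDensity.ennreal_ofReal
    (by fun_prop)]
  refine lintegral_congr fun x => ?_
  rw [Pi.mul_apply, ENNReal.ofReal_mul (norm_nonneg x), mul_comm]

end StaircaseDensity

section StaircaseMechanism

variable {E : Type*} [NormedAddCommGroup E] [NormedSpace ℝ E] [Nontrivial E] [MeasurableSpace E]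
  [BorelSpace E] [FiniteDimensional ℝ E] {μ : Measure E} [μ.IsAddHaarMeasure] {b ε Δ γ : ℝ}

lemma integrable_norm_pow_mul_staircaseProfile (hb : 0 < b) (hb1 : b < 1) (hΔ : 0 < Δ) (n : ℕ) :
    Integrable (fun x => ‖x‖ ^ n * staircaseProfile b γ (‖x‖ / Δ)) μ := by
  rw [integrable_fun_norm_addHaar μ (f := fun r => r ^ n * staircaseProfile b γ (r / Δ))]
  simp only [smul_eq_mul, ← mul_assoc, ← pow_add]
  rw [integrableOn_Ioi_pow_mul_comp_div_iff hΔ]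
  exact integrableOn_pow_mul_staircaseProfile hb hb1 _

lemma integral_norm_pow_mul_staircaseProfile (hΔ : 0 < Δ) (n : ℕ) :
    ∫ x, ‖x‖ ^ n * staircaseProfile b γ (‖x‖ / Δ) ∂μ =
      Module.finrank ℝ E * μ.real (Metric.ball 0 1) * Δ ^ (Module.finrank ℝ E + n) *
        staircaseMoment b γ (Module.finrank ℝ E - 1 + n) := by
  have hd : Module.finrank ℝ E - 1 + n + 1 = Module.finrank ℝ E + n := by
    have : 0 < Module.finrank ℝ E := Module.finrank_pos
    omega
  rw [integral_fun_norm_addHaar μ fun r => r ^ n * staircaseProfile b γ (r / Δ)]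
  simp only [smul_eq_mul, nsmul_eq_mul, ← mul_assoc (_ ^ _ : ℝ), ← pow_add]
  rw [integral_Ioi_pow_mul_comp_div hΔ, hd, staircaseMoment]
  ring

lemma integral_staircaseProfile_norm_div (hΔ : 0 < Δ) :
    ∫ x, staircaseProfile b γ (‖x‖ / Δ) ∂μ =
      Module.finrank ℝ E * μ.real (Metric.ball 0 1) * Δ ^ Module.finrank ℝ E *
        staircaseMoment b γ (Module.finrank ℝ E - 1) := by
  simpa using integral_norm_pow_mul_staircaseProfile (b := b) (γ := γ) (μ := μ) hΔ 0

lemma integral_staircaseProfile_norm_div_pos (hb : 0 < b) (hb1 : b < 1) (hΔ : 0 < Δ) :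
    0 < ∫ x, staircaseProfile b γ (‖x‖ / Δ) ∂μ := by
  have hball : 0 < μ.real (Metric.ball (0 : E) 1) :=
    ENNReal.toReal_pos (Metric.measure_ball_pos μ 0 one_pos).ne' measure_ball_lt_top.ne
  have hd : 0 < Module.finrank ℝ E := Module.finrank_pos
  have hm := staircaseMoment_pos (γ := γ) hb hb1 (Module.finrank ℝ E - 1)
  rw [integral_staircaseProfile_norm_div hΔ]
  positivity

lemma lintegral_norm_pow_mul_staircaseDensity (hε : 0 < ε) (hΔ : 0 < Δ) (n : ℕ) :
    ∫⁻ x, ENNReal.ofReal (‖x‖ ^ n * staircaseDensity μ ε Δ γ x) ∂μ =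
      ENNReal.ofReal (Δ ^ n * staircaseMoment (exp (-ε)) γ (Module.finrank ℝ E - 1 + n) /
        staircaseMoment (exp (-ε)) γ (Module.finrank ℝ E - 1)) := by
  have hb := exp_pos (-ε)
  have hb1 : exp (-ε) < 1 := exp_lt_one_iff.2 (neg_neg_of_pos hε)
  have hpos := integral_staircaseProfile_norm_div_pos (γ := γ) (μ := μ) hb hb1 hΔ
  have hint := (integrable_norm_pow_mul_staircaseProfile (γ := γ) (μ := μ) hb hb1 hΔ n).div_const
    (∫ x, staircaseProfile (exp (-ε)) γ (‖x‖ / Δ) ∂μ)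
  simp only [staircaseDensity, ← mul_div_assoc]
  rw [← ofReal_integral_eq_lintegral_ofReal hint (ae_of_all _ fun x => ?_), integral_div,
    integral_norm_pow_mul_staircaseProfile hΔ]
  · congr 1
    rw [integral_staircaseProfile_norm_div hΔ] at hpos ⊢
    have hm := staircaseMoment_pos (γ := γ) hb hb1 (Module.finrank ℝ E - 1)
    rw [div_eq_div_iff hpos.ne' hm.ne']
    ring
  · have := (staircaseProfile_pos (γ := γ) hb (‖x‖ / Δ)).le
    simp only [Pi.zero_apply]
    positivity

lemma isProbabilityMeasure_withDensity_staircaseDensity (hε : 0 < ε) (hΔ : 0 < Δ) :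
    IsProbabilityMeasure (μ.withDensity fun x => ENNReal.ofReal (staircaseDensity μ ε Δ γ x)) := by
  have hmass := lintegral_norm_pow_mul_staircaseDensity (μ := μ) (γ := γ) hε hΔ 0
  have hm := staircaseMoment_pos (γ := γ) (exp_pos (-ε))
    (exp_lt_one_iff.2 (neg_neg_of_pos hε)) (Module.finrank ℝ E - 1)
  refine ⟨?_⟩
  rw [withDensity_apply _ .univ, setLIntegral_univ]
  simpa [hm.ne'] using hmass

end StaircaseMechanism

theorem staircase_optimal_general {E : Type*} [NormedAddCommGroup E] [NormedSpace ℝ E]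
    [MeasurableSpace E] [BorelSpace E] (hdim : Module.finrank ℝ E = 2) (μ : Measure E)
    [μ.IsAddHaarMeasure] {ε Δ : ℝ} (hε : 0 < ε) (hΔ : 0 < Δ) :
    (⨅ (ν : Measure E) (_ : IsProbabilityMeasure ν ∧ IsDifferentiallyPrivate ε Δ ν),
      ∫⁻ x, ENNReal.ofReal ‖x‖ ∂ν) =
    ⨅ (γ : ℝ) (_ : γ ∈ Set.Icc (0 : ℝ) 1),
      ∫⁻ x, ENNReal.ofReal (‖x‖ * staircaseDensity μ ε Δ γ x) ∂μ := by
  have : FiniteDimensional ℝ E := .of_finrank_pos (by omega)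
  have : Nontrivial E := Module.nontrivial_of_finrank_pos (R := ℝ) (by omega)
  refine le_antisymm (le_iInf₂ fun γ hγ => ?_) ?_
  · rw [← lintegral_norm_withDensity_staircaseDensity]
    exact iInf₂_le _ ⟨isProbabilityMeasure_withDensity_staircaseDensity hε hΔ,
      (isPrivateDensity_staircaseDensity hε.le hΔ).isDifferentiallyPrivate_withDensity
        measurable_staircaseDensity⟩
  · obtain ⟨γ, hγ, hopt⟩ := exists_ofReal_le_lintegral_norm (E := E) hdim hε hΔ
    refine (iInf₂_le γ hγ).trans (le_iInf₂ fun ν hν => ?_)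
    have hcost := lintegral_norm_pow_mul_staircaseDensity (μ := μ) (γ := γ) hε hΔ 1
    simp only [pow_one, hdim] at hcost
    rw [hcost]
    exact hopt ν hν.1 hν.2

/-! ### The plane with the `ℓ¹` norm -/

/-- Lebesgue measure on the plane with the `ℓ¹` norm. -/
def l1Volume : Measure (WithLp 1 (ℝ × ℝ)) := volume.map (MeasurableEquiv.toLp 1 (ℝ × ℝ))

section L1Plane

variable {ε Δ γ : ℝ}

lemma norm_toLp_one (x : ℝ × ℝ) : ‖WithLp.toLp 1 x‖ = l1 x :=
  WithLp.prod_norm_eq_of_L1 _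

lemma finrank_withLp_one_prod : Module.finrank ℝ (WithLp 1 (ℝ × ℝ)) = 2 := by
  rw [(WithLp.linearEquiv 1 ℝ (ℝ × ℝ)).finrank_eq, Module.finrank_prod, Module.finrank_self]

instance isAddHaarMeasure_l1Volume : l1Volume.IsAddHaarMeasure :=
  (WithLp.prodContinuousLinearEquiv 1 ℝ ℝ ℝ).symm.isAddHaarMeasure_map volume

lemma volume_l1_lt_one : volume {x | l1 x < 1} = 2 := by
  have hpreimage : MeasurableEquiv.finTwoArrow ⁻¹' {x : ℝ × ℝ | l1 x < 1} =
      {x | ∑ i, |x i| ^ (1 : ℝ) < 1} := by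
    ext x
    simp [l1]
  rw [← (volume_preserving_finTwoArrow ℝ).measure_preimage_equiv, hpreimage,
    volume_sum_rpow_lt_one (Fin 2) le_rfl]
  norm_num [Gamma_ofNat_eq_factorial]

lemma l1Volume_real_unitBall : l1Volume.real (Metric.ball 0 1) = 2 := by
  have hpreimage : MeasurableEquiv.toLp 1 (ℝ × ℝ) ⁻¹' Metric.ball 0 1 = {x | l1 x < 1} := by
    ext x
    simp [norm_toLp_one]
  rw [Measure.real, l1Volume, MeasurableEquiv.map_apply, hpreimage, volume_l1_lt_one,
    ENNReal.toReal_ofNat]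

lemma anorm_eq_inv_integral (hε : 0 < ε) (hΔ : 0 < Δ) (hγ : γ ∈ Set.Icc (0 : ℝ) 1) :
    anorm ε Δ γ = (∫ x, staircaseProfile (exp (-ε)) γ (‖x‖ / Δ) ∂l1Volume)⁻¹ := by
  have hb1 : exp (-ε) < 1 := exp_lt_one_iff.2 (neg_neg_of_pos hε)
  have h1b : 1 - exp (-ε) ≠ 0 := (sub_pos.2 hb1).ne'
  have : Nontrivial (WithLp 1 (ℝ × ℝ)) := (WithLp.toLp_injective 1).nontrivial
  rw [integral_staircaseProfile_norm_div hΔ, finrank_withLp_one_prod, l1Volume_real_unitBall,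
    staircaseMoment_one (exp_pos _) hb1 hγ.1 hγ.2, anorm, geomTail, one_div]
  congr 1
  field_simp
  push_cast
  ring

lemma stair_eq_anorm_mul_staircaseProfile (hΔ : 0 < Δ) (x : ℝ × ℝ) :
    stair ε Δ γ x = anorm ε Δ γ * staircaseProfile (exp (-ε)) γ (l1 x / Δ) := by
  have hexp (k : ℤ) : exp (-ε) ^ k = exp (-k * ε) := by
    rw [← Real.rpow_intCast, ← exp_mul, neg_mul, neg_mul, mul_comm]
  simp only [stair, staircaseProfile, hexp, div_lt_iff₀ hΔ]
  split_ifs <;> push_cast <;> rfl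

lemma stair_eq_staircaseDensity (hε : 0 < ε) (hΔ : 0 < Δ) (hγ : γ ∈ Set.Icc (0 : ℝ) 1)
    (x : ℝ × ℝ) : stair ε Δ γ x = staircaseDensity l1Volume ε Δ γ (WithLp.toLp 1 x) := by
  rw [stair_eq_anorm_mul_staircaseProfile hΔ, anorm_eq_inv_integral hε hΔ hγ, staircaseDensity,
    norm_toLp_one, inv_mul_eq_div]

lemma isDifferentiallyPrivate_map_toLp_iff {ν : Measure (ℝ × ℝ)} :
    IsDifferentiallyPrivate ε Δ (ν.map (MeasurableEquiv.toLp 1 (ℝ × ℝ))) ↔ DPC ε Δ ν := by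
  set e := MeasurableEquiv.toLp 1 (ℝ × ℝ)
  have himage (S : Set (WithLp 1 (ℝ × ℝ))) (t : ℝ × ℝ) :
      e ⁻¹' ((· + WithLp.toLp 1 t) '' S) = (· + t) '' (e ⁻¹' S) := by
    rw [Set.image_add_right, Set.image_add_right]
    rfl
  simp only [IsDifferentiallyPrivate, DPC, MeasurableEquiv.map_apply]
  constructor
  · intro hν S hS t ht
    have hpriv := hν (e.symm ⁻¹' S) (e.symm.measurable hS) (WithLp.toLp 1 t)
      (by rwa [norm_toLp_one])
    rwa [himage, e.preimage_symm, e.preimage_image] at hpriv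
  · intro hν S hS t ht
    rw [← WithLp.toLp_ofLp 1 t, himage]
    exact hν _ (e.measurable hS) _ (by rwa [← norm_toLp_one])

lemma cost_eq_lintegral_norm_map_toLp (ν : Measure (ℝ × ℝ)) :
    cost ν = ∫⁻ x, ENNReal.ofReal ‖x‖ ∂ν.map (MeasurableEquiv.toLp 1 (ℝ × ℝ)) := by
  rw [lintegral_map_equiv]
  simp only [cost, MeasurableEquiv.coe_toLp, norm_toLp_one]

lemma iInf_cost_eq_iInf_lintegral_norm :
    (⨅ (ν : Measure (ℝ × ℝ)) (_ : IsProbabilityMeasure ν ∧ DPC ε Δ ν), cost ν) =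
      ⨅ (ν : Measure (WithLp 1 (ℝ × ℝ)))
        (_ : IsProbabilityMeasure ν ∧ IsDifferentiallyPrivate ε Δ ν),
        ∫⁻ x, ENNReal.ofReal ‖x‖ ∂ν := by
  let e := MeasurableEquiv.toLp 1 (ℝ × ℝ)
  have hsurj : Function.Surjective (Measure.map e) := fun ν => ⟨_, e.map_map_symm⟩
  refine hsurj.iInf_congr _ fun ν => ?_
  rw [Measure.isProbabilityMeasure_map_iff e.measurable.aemeasurable,
    isDifferentiallyPrivate_map_toLp_iff, cost_eq_lintegral_norm_map_toLp]

lemma lintegral_l1_mul_stair (hε : 0 < ε) (hΔ : 0 < Δ) (hγ : γ ∈ Set.Icc (0 : ℝ) 1) :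
    ∫⁻ x, ENNReal.ofReal (l1 x * stair ε Δ γ x) =
      ∫⁻ x, ENNReal.ofReal (‖x‖ * staircaseDensity l1Volume ε Δ γ x) ∂l1Volume := by
  conv_rhs => rw [l1Volume, lintegral_map_equiv, ← l1Volume]
  simp only [stair_eq_staircaseDensity hε hΔ hγ, MeasurableEquiv.coe_toLp, norm_toLp_one]

end L1Plane

/-- Theorem 1: for d = 2 and the ℓ¹ cost, the infimum of the expected cost over all
ε-differentially-private noise distributions equals the infimum over γ ∈ [0,1] of the
expected cost of the staircase distribution. -/
theorem staircase_optimal (ε Δ : ℝ) (hε : 0 < ε) (hΔ : 0 < Δ) :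
    (⨅ (μ : Measure (ℝ × ℝ)) (_ : IsProbabilityMeasure μ ∧ DPC ε Δ μ), cost μ) =
    ⨅ (γ : ℝ) (_ : γ ∈ Set.Icc (0 : ℝ) 1),
      ∫⁻ x, ENNReal.ofReal (l1 x * stair ε Δ γ x) := by
  rw [iInf_cost_eq_iInf_lintegral_norm,
    staircase_optimal_general finrank_withLp_one_prod l1Volume hε hΔ]
  exact biInf_congr fun γ hγ => (lintegral_l1_mul_stair hε hΔ hγ).symm
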